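/- arXiv:1310.5921 — 4 statements merged into one kernel-verified Lean document; each statement's English description precedes it below -/
import Mathlib

section
/- For every integer k ≥ 1 and every real number t ≠ 0, the k-th power of the function f(t) = 1/(e^t − 1) satisfies (1/(e^t − 1))^k = (1/(k−1)!) Σ_{m=1}^{k} (−1)^{m−1} s(k, m) f^{(m−1)}(t), where f^{(m−1)} denotes the (m−1)-st derivative of f (with f^{(0)} = f). -/
open Real Finset

/-- Signed Stirling numbers of the first kind, real-valued: the coefficient of `x^m` in
`x (x-1) ⋯ (x-k+1)`. -/
noncomputable def s1 (k m : ℕ) : ℝ := (descPochhammer ℝ k).coeff m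

lemma s1_succ (n j : ℕ) : s1 (n + 1) (j + 1) = s1 n j - n * s1 n (j + 1) := by
  unfold s1
  rw [descPochhammer_succ_right, mul_sub, Polynomial.coeff_sub, Polynomial.coeff_mul_X,
    Polynomial.coeff_mul_natCast, mul_comm]

lemma s1_zero (n : ℕ) : s1 (n + 1) 0 = 0 := by
  unfold s1
  rw [descPochhammer_succ_left]
  simp

lemma s1_big (n j : ℕ) (h : n < j) : s1 n j = 0 := by
  unfold s1
  apply Polynomial.coeff_eq_zero_of_natDegree_lt
  rwa [descPochhammer_natDegree]

lemma exp_sub_ne (t : ℝ) (ht : t ≠ 0) : Real.exp t - 1 ≠ 0 := by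
  intro h
  exact ht (Real.exp_eq_one_iff t |>.1 (by linarith))

lemma hasDerivAt_iter (j : ℕ) (t : ℝ) (ht : t ≠ 0) :
    HasDerivAt (iteratedDeriv j (fun t : ℝ => 1 / (Real.exp t - 1)))
      (iteratedDeriv (j + 1) (fun t : ℝ => 1 / (Real.exp t - 1)) t) t := by
  rw [iteratedDeriv_succ]
  apply DifferentiableAt.hasDerivAt
  have hc : ContDiffAt ℝ (j + 1 : ℕ) (fun t : ℝ => 1 / (Real.exp t - 1)) t := by
    have h2 : ContDiffAt ℝ (j + 1 : ℕ) (fun t : ℝ => Real.exp t - 1) t :=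
      (Real.contDiff_exp.contDiffAt).sub contDiffAt_const
    exact ContDiffAt.div (f := fun _ : ℝ => (1 : ℝ)) contDiffAt_const h2 (exp_sub_ne t ht)
  rw [iteratedDeriv_eq_equiv_comp, LinearIsometryEquiv.comp_differentiableAt_iff]
  exact ContDiffAt.differentiableAt_iteratedFDeriv hc (by exact_mod_cast Nat.lt_succ_self j)

lemma main_aux (n : ℕ) : ∀ t : ℝ, t ≠ 0 →
    (Nat.factorial n : ℝ) * (1 / (Real.exp t - 1)) ^ (n + 1) =
      ∑ j ∈ Finset.range (n + 1), (-1 : ℝ) ^ j * s1 (n + 1) (j + 1) *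
        iteratedDeriv j (fun t : ℝ => 1 / (Real.exp t - 1)) t := by
  induction n with
  | zero =>
    intro t ht
    simp [s1]
  | succ n ih =>
    intro t ht
    have h0 := exp_sub_ne t ht
    have hf : HasDerivAt (fun t : ℝ => 1 / (Real.exp t - 1))
        (-(1 / (Real.exp t - 1)) - (1 / (Real.exp t - 1)) ^ 2) t := by
      have h := ((hasDerivAt_const t (1 : ℝ)).div ((Real.hasDerivAt_exp t).sub_const 1) h0)
      refine h.congr_deriv ?_
      field_simp
      ring
    have hL := (hf.pow (n + 1)).const_mul (Nat.factorial n : ℝ)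
    have hR : HasDerivAt (fun t => ∑ j ∈ Finset.range (n + 1),
        (-1 : ℝ) ^ j * s1 (n + 1) (j + 1) *
        iteratedDeriv j (fun t : ℝ => 1 / (Real.exp t - 1)) t)
        (∑ j ∈ Finset.range (n + 1), (-1 : ℝ) ^ j * s1 (n + 1) (j + 1) *
        iteratedDeriv (j + 1) (fun t : ℝ => 1 / (Real.exp t - 1)) t) t :=
      HasDerivAt.fun_sum fun j _ => (hasDerivAt_iter j t ht).const_mul _
    have hE := hL.unique (hR.congr_of_eventuallyEq
      ((eventually_ne_nhds ht).mono fun x hx => ih x hx))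
    have e1 : ∑ j ∈ Finset.range (n + 1 + 1), (-1 : ℝ) ^ j * s1 (n + 1 + 1) (j + 1) *
        iteratedDeriv j (fun t : ℝ => 1 / (Real.exp t - 1)) t =
        (∑ j ∈ Finset.range (n + 1 + 1), (-1 : ℝ) ^ j * s1 (n + 1) j *
          iteratedDeriv j (fun t : ℝ => 1 / (Real.exp t - 1)) t) -
        (n + 1) * ∑ j ∈ Finset.range (n + 1 + 1), (-1 : ℝ) ^ j * s1 (n + 1) (j + 1) *
          iteratedDeriv j (fun t : ℝ => 1 / (Real.exp t - 1)) t := by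
      rw [Finset.mul_sum, ← Finset.sum_sub_distrib]
      refine Finset.sum_congr rfl fun j _ => ?_
      rw [s1_succ (n + 1) j]
      push_cast
      ring
    have e2 : ∑ j ∈ Finset.range (n + 1 + 1), (-1 : ℝ) ^ j * s1 (n + 1) j *
          iteratedDeriv j (fun t : ℝ => 1 / (Real.exp t - 1)) t =
        - ∑ j ∈ Finset.range (n + 1), (-1 : ℝ) ^ j * s1 (n + 1) (j + 1) *
        iteratedDeriv (j + 1) (fun t : ℝ => 1 / (Real.exp t - 1)) t := by
      rw [Finset.sum_range_succ', s1_zero, ← Finset.sum_neg_distrib, mul_zero, zero_mul, add_zero]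
      refine Finset.sum_congr rfl fun j _ => ?_
      ring
    rw [e1, e2, ← hE, Finset.sum_range_succ, s1_big (n + 1) (n + 1 + 1) (Nat.lt_succ_self _),
      mul_zero, zero_mul, add_zero, ← ih t ht, Nat.factorial_succ]
    generalize 1 / (Real.exp t - 1) = y
    push_cast [Nat.add_sub_cancel]
    ring

theorem stmt_5 (k : ℕ) (hk : 1 ≤ k) (t : ℝ) (ht : t ≠ 0) :
    (1 / (Real.exp t - 1)) ^ k =
      (1 / (Nat.factorial (k - 1) : ℝ)) *
        ∑ m ∈ Finset.Icc 1 k,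
          (-1 : ℝ) ^ (m - 1) * s1 k m *
            iteratedDeriv (m - 1) (fun t : ℝ => 1 / (Real.exp t - 1)) t := by
  obtain ⟨n, rfl⟩ : ∃ n, k = n + 1 := ⟨k - 1, by omega⟩
  have h := main_aux n t ht
  have hn : (Nat.factorial n : ℝ) ≠ 0 := by exact_mod_cast Nat.factorial_ne_zero n
  have e : Finset.Icc 1 (n + 1) = Finset.Ico 1 (n + 1 + 1) := by
    ext x
    simp only [Finset.mem_Icc, Finset.mem_Ico]
    omega
  rw [e, Finset.sum_Ico_eq_sum_range]
  simp only [Nat.add_sub_cancel, Nat.add_sub_cancel_left, Nat.add_comm 1]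
  rw [← h]
  field_simp
end

section
/- Let λ be a real number with λ ≠ 1 and let n ≥ 1 be an integer. Then the n-th derivative at t = 0 of the function t ↦ t/(λ e^t − 1) equals (−1)^{n−1} n Σ_{k=1}^{n} (k−1)! S(n, k)/(λ−1)^k. (Equivalently, the n-th Apostol–Bernoulli number 𝓑_n(λ), defined by t/(λ e^t − 1) = Σ_{k=0}^{∞} 𝓑_k(λ) t^k/k! near 0, is given by this formula.) -/
open Real Finset

/-- Stirling numbers of the second kind, real-valued, via the explicit formula
`S(k,m) = (1/m!) ∑_{ℓ=1}^m (-1)^(m-ℓ) C(m,ℓ) ℓ^k`; this gives `0` when `m > k`. -/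
noncomputable def S2 (k m : ℕ) : ℝ :=
  (1 / (Nat.factorial m : ℝ)) *
    ∑ ℓ ∈ Finset.Icc 1 m, (-1 : ℝ) ^ (m - ℓ) * (Nat.choose m ℓ : ℝ) * (ℓ : ℝ) ^ k

noncomputable def TT (n k : ℕ) : ℝ :=
  ∑ j ∈ Finset.range (k + 1), (-1 : ℝ) ^ (k - j) * (Nat.choose k j : ℝ) * (j : ℝ) ^ n

theorem TT_rec (n k : ℕ) : TT (n + 1) (k + 1) = (k + 1) * (TT n (k + 1) + TT n k) := by
  have h3 : TT n k = ∑ j ∈ Finset.range (k + 1 + 1),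
      (-1 : ℝ) ^ (k - j) * (Nat.choose k j : ℝ) * (j : ℝ) ^ n := by
    rw [Finset.sum_range_succ]
    simp [TT]
  rw [h3]
  unfold TT
  rw [Finset.sum_range_succ', Finset.sum_range_succ' _ (k + 1), Finset.sum_range_succ' _ (k + 1)]
  have e : ∀ a b c d : ℝ, (a + b) + (c + d) = (a + c) + (b + d) := by intros; ring
  rw [e, ← Finset.sum_add_distrib]
  have h0 : (-1 : ℝ) ^ (k + 1 - 0) * ((k + 1).choose 0 : ℝ) * ((0 : ℕ) : ℝ) ^ n +
      (-1 : ℝ) ^ (k - 0) * (k.choose 0 : ℝ) * ((0 : ℕ) : ℝ) ^ n = 0 := by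
    simp only [Nat.sub_zero, Nat.choose_zero_right]
    ring
  rw [h0, add_zero, Finset.mul_sum]
  simp only [Nat.cast_zero, ne_eq, Nat.succ_ne_zero, not_false_eq_true, zero_pow, mul_zero,
    add_zero]
  apply Finset.sum_congr rfl
  intro j hj
  have hjk : j ≤ k := by simpa [Nat.lt_succ_iff] using hj
  have h1 : ((k : ℝ) + 1) * (k.choose j : ℝ) = ((k + 1).choose (j + 1) : ℝ) * (j + 1) := by
    exact_mod_cast Nat.add_one_mul_choose_eq k j
  have h2 : ((k + 1).choose (j + 1) : ℝ) = k.choose j + k.choose (j + 1) := by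
    exact_mod_cast Nat.choose_succ_succ k j
  have h4 : (-1 : ℝ) ^ (k - (j + 1)) * (k.choose (j + 1) : ℝ)
      = - ((-1 : ℝ) ^ (k - j) * (k.choose (j + 1) : ℝ)) := by
    rcases Nat.lt_or_eq_of_le hjk with h | h
    · have : k - j = (k - (j + 1)) + 1 := by omega
      rw [this, pow_succ]; ring
    · subst h; simp
  rw [h4, Nat.add_sub_add_right]
  push_cast
  rw [pow_succ]
  linear_combination (-(-1 : ℝ) ^ (k - j) * (j + 1 : ℝ) ^ n) * h1
    - (k + 1) * ((-1 : ℝ) ^ (k - j) * (j + 1 : ℝ) ^ n) * h2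

theorem TT_eq (n k : ℕ) : TT n k = (k.factorial : ℝ) * (Nat.stirlingSecond n k : ℝ) := by
  induction n generalizing k with
  | zero =>
    have h := add_pow (1 : ℝ) (-1) k
    have h' : TT 0 k = (1 + (-1 : ℝ)) ^ k := by
      rw [h]; unfold TT; apply Finset.sum_congr rfl; intros; simp
    rw [h']
    cases k <;> simp
  | succ n ih =>
    cases k with
    | zero => simp [TT]
    | succ k =>
      rw [TT_rec, ih, ih, Nat.stirlingSecond_succ_succ, Nat.factorial_succ]
      push_cast
      ring

theorem S2_eq (n k : ℕ) : S2 (n + 1) k = (Nat.stirlingSecond (n + 1) k : ℝ) := by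
  have h : S2 (n + 1) k = (1 / (Nat.factorial k : ℝ)) * TT (n + 1) k := by
    unfold S2 TT
    have hI : Finset.Icc 1 k = Finset.Ico 1 (k + 1) := by ext; simp only [Finset.mem_Icc, Finset.mem_Ico]; omega
    rw [hI, Finset.sum_Ico_eq_sum_range, Finset.sum_range_succ']
    simp [add_comm 1]
  rw [h, TT_eq]
  have : (k.factorial : ℝ) ≠ 0 := by positivity
  field_simp

noncomputable def GG (l : ℝ) (n : ℕ) (t : ℝ) : ℝ :=
  (-1) ^ n * ∑ k ∈ Finset.range (n + 1),
    (k.factorial : ℝ) * (Nat.stirlingSecond (n + 1) (k + 1) : ℝ) *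
      ((l * Real.exp t - 1)⁻¹) ^ (k + 1)

theorem GG_deriv (l : ℝ) (n : ℕ) (t : ℝ) (ht : l * Real.exp t - 1 ≠ 0) :
    HasDerivAt (GG l n) (GG l (n + 1) t) t := by
  have hg : HasDerivAt (fun t => (l * Real.exp t - 1)⁻¹)
      (-((l * Real.exp t - 1)⁻¹ + (l * Real.exp t - 1)⁻¹ ^ 2)) t := by
    have := (((Real.hasDerivAt_exp t).const_mul l).sub_const 1).fun_inv ht
    refine this.congr_deriv ?_
    generalize l * Real.exp t = x at *
    have hx : x = (x - 1) + 1 := by ring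
    generalize x - 1 = y at *
    subst hx
    field_simp
  have hs := (HasDerivAt.fun_sum (u := Finset.range (n + 1)) (fun k _ =>
    ((hg.fun_pow (k + 1)).const_mul
      ((k.factorial : ℝ) * (Nat.stirlingSecond (n + 1) (k + 1) : ℝ))))).const_mul ((-1 : ℝ) ^ n)
  refine hs.congr_deriv ?_
  unfold GG
  generalize (l * Real.exp t - 1)⁻¹ = g
  have key : ∀ k : ℕ, ((k.factorial : ℝ) * (Nat.stirlingSecond (n + 2) (k + 1) : ℝ)) * g ^ (k + 1)
      = ((k + 1).factorial : ℝ) * (Nat.stirlingSecond (n + 1) (k + 1) : ℝ) * g ^ (k + 1)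
        + (k.factorial : ℝ) * (Nat.stirlingSecond (n + 1) k : ℝ) * g ^ (k + 1) := by
    intro k
    rw [Nat.stirlingSecond_succ_succ, Nat.factorial_succ]
    push_cast
    ring
  rw [Finset.sum_congr rfl (fun k _ => key k), Finset.sum_add_distrib,
    Finset.sum_range_succ _ (n + 1), Finset.sum_range_succ' _ (n + 1),
    Nat.stirlingSecond_eq_zero_of_lt (Nat.lt_succ_self (n + 1))]
  simp only [Nat.stirlingSecond_succ_zero, Nat.cast_zero, mul_zero, zero_mul, add_zero]
  rw [← Finset.sum_add_distrib, Finset.mul_sum, Finset.mul_sum]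
  apply Finset.sum_congr rfl
  intro k _
  rw [Nat.factorial_succ]
  push_cast
  ring

theorem iter_eq (l : ℝ) (n : ℕ) (t : ℝ) (ht : l * Real.exp t - 1 ≠ 0) :
    iteratedDeriv (n + 1) (fun t : ℝ => t / (l * Real.exp t - 1)) t =
      t * GG l (n + 1) t + (n + 1) * GG l n t := by
  have hev : ∀ t : ℝ, l * Real.exp t - 1 ≠ 0 → ∀ᶠ s in nhds t, l * Real.exp s - 1 ≠ 0 := by
    intro t ht
    have hc : Continuous fun s : ℝ => l * Real.exp s - 1 := by fun_prop
    exact hc.continuousAt.eventually_ne ht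
  induction n generalizing t with
  | zero =>
    have h0 : (fun t : ℝ => t / (l * Real.exp t - 1)) = fun t => t * GG l 0 t := by
      funext t; simp [GG, div_eq_mul_inv, Nat.stirlingSecond_self]
    rw [iteratedDeriv_one, h0, ((hasDerivAt_id' t).fun_mul (GG_deriv l 0 t ht)).deriv]
    push_cast; ring
  | succ n ih =>
    rw [iteratedDeriv_succ, Filter.EventuallyEq.deriv_eq ((hev t ht).mono fun s hs => ih s hs),
      (((hasDerivAt_id' t).fun_mul (GG_deriv l (n + 1) t ht)).fun_add
        ((GG_deriv l n t ht).const_mul ((n : ℝ) + 1))).deriv]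
    push_cast; ring

theorem stmt_12 (l : ℝ) (hl : l ≠ 1) (n : ℕ) (hn : 1 ≤ n) :
    iteratedDeriv n (fun t : ℝ => t / (l * Real.exp t - 1)) 0 =
      (-1 : ℝ) ^ (n - 1) * (n : ℝ) *
        ∑ k ∈ Finset.Icc 1 n, (Nat.factorial (k - 1) : ℝ) * S2 n k / (l - 1) ^ k := by
  obtain ⟨n, rfl⟩ : ∃ m, n = m + 1 := ⟨n - 1, by omega⟩
  rw [iter_eq l n 0 (by simpa [sub_eq_zero] using hl)]
  have hI : Finset.Icc 1 (n + 1) = Finset.Ico 1 (n + 1 + 1) := by ext; simp only [Finset.mem_Icc, Finset.mem_Ico]; omega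
  rw [hI, Finset.sum_Ico_eq_sum_range]
  simp only [GG, Real.exp_zero, mul_one, zero_mul, zero_add, Nat.add_sub_cancel, S2_eq]
  have : ∀ k, 1 + k = k + 1 := fun k => add_comm _ _
  simp only [this, Nat.add_sub_cancel, div_eq_mul_inv, inv_pow]
  push_cast
  ring
end

section
/- For every integer n ≥ 1, the Euler number E_{2n} satisfies E_{2n} = 4^n Σ_{k=0}^{2n} [ Σ_{ℓ=1}^{2n−k+1} ((−1)^{ℓ−1} (ℓ−1)!/2^{ℓ−1}) S(2n−k+1, ℓ) ] ((−1)^k/2^k) C(2n, k). Equivalently, the (2n)-th derivative at t = 0 of the function t ↦ 2 e^{t/2}/(e^t + 1) equals E_{2n}/2^{2n}, with E_{2n} given by the displayed sum. -/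
open Real Finset

lemma Icc_sum (f : ℕ → ℝ) (m : ℕ) : ∑ l ∈ Finset.Icc 1 m, f l = ∑ l ∈ Finset.range m, f (l+1) := by
  induction m with
  | zero => simp
  | succ m ih => rw [Finset.sum_Icc_succ_top (by omega), ih, Finset.sum_range_succ]

lemma S2_zero_right (k : ℕ) : S2 k 0 = 0 := by simp [S2]

lemma S2_eq_s14 (k m : ℕ) : S2 (k+1) m = (1 / (Nat.factorial m : ℝ)) *
    ∑ l ∈ Finset.range (m+1), (-1 : ℝ) ^ (m - l) * (Nat.choose m l : ℝ) * (l : ℝ) ^ (k+1) := by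
  rw [S2, Finset.sum_range_succ', Icc_sum]
  simp

lemma S2_one (m : ℕ) (hm : 2 ≤ m) : S2 1 m = 0 := by
  obtain ⟨p, rfl⟩ : ∃ p, m = p + 1 := ⟨m - 1, by omega⟩
  have hp : p ≠ 0 := by omega
  rw [S2_eq_s14, Finset.sum_range_succ']
  have h : ∀ l ∈ range (p+1), (-1 : ℝ) ^ (p + 1 - (l+1)) * (Nat.choose (p+1) (l+1) : ℝ) * ((l+1 : ℕ) : ℝ) ^ (0+1)
      = (p+1) * ((1:ℝ)^l * (-1 : ℝ) ^ (p - l) * (Nat.choose p l : ℝ)) := by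
    intro l _
    have := Nat.add_one_mul_choose_eq p l
    have h2 : ((p:ℝ)+1) * (Nat.choose p l : ℝ) = (Nat.choose (p+1) (l+1) : ℝ) * (l+1) := by exact_mod_cast this
    rw [Nat.add_sub_add_right]
    push_cast
    linear_combination -(-1 : ℝ) ^ (p - l) * h2
  rw [Finset.sum_congr rfl h, ← Finset.mul_sum, ← add_pow]
  simp [hp]

lemma S2_succ (k m : ℕ) : S2 (k+2) (m+1) = (m+1) * S2 (k+1) (m+1) + S2 (k+1) m := by
  rw [S2_eq_s14, S2_eq_s14, S2_eq_s14]
  have hf : (Nat.factorial (m+1) : ℝ) = (m+1) * Nat.factorial m := by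
    push_cast [Nat.factorial_succ]; ring
  have h0 : (Nat.factorial m : ℝ) ≠ 0 := by positivity
  have h1 : (m + 1 : ℝ) ≠ 0 := by positivity
  have key : ∑ l ∈ Finset.range (m+1+1), (-1 : ℝ) ^ (m+1 - l) * (Nat.choose (m+1) l : ℝ) * (l : ℝ) ^ (k+1+1)
    = (m+1) * ∑ l ∈ Finset.range (m+1+1), (-1 : ℝ) ^ (m+1 - l) * (Nat.choose (m+1) l : ℝ) * (l : ℝ) ^ (k+1)
     + (m+1) * ∑ l ∈ Finset.range (m+1), (-1 : ℝ) ^ (m - l) * (Nat.choose m l : ℝ) * (l : ℝ) ^ (k+1) := by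
    rw [Finset.sum_range_succ, Finset.sum_range_succ _ (m+1), mul_add, Finset.mul_sum, Finset.mul_sum, add_right_comm (∑ l ∈ _, _) _ (∑ l ∈ _, _), ← Finset.sum_add_distrib]
    congr 1
    · apply Finset.sum_congr rfl
      intro l hl
      have hl : l ≤ m := by simpa [Nat.lt_succ_iff] using hl
      have h2 := Nat.choose_mul_succ_eq m l
      have h3 : (Nat.choose m l : ℝ) * (m+1) = Nat.choose (m+1) l * ((m:ℝ) + 1 - l) := by
        have : ((m + 1 - l : ℕ) : ℝ) = (m:ℝ) + 1 - l := by
          rw [Nat.cast_sub (by omega)]; push_cast; ring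
        rw [← this]; exact_mod_cast h2
      rw [Nat.succ_sub hl, pow_succ, pow_succ (l:ℝ) (k+1)]
      linear_combination -(-1 : ℝ) ^ (m - l) * (l:ℝ)^(k+1) * h3
    · push_cast; simp; ring
  rw [key, hf]
  field_simp

lemma S2_vanish (k m : ℕ) (h : k + 1 < m) : S2 (k+1) m = 0 := by
  induction k generalizing m with
  | zero => exact S2_one m (by omega)
  | succ k ih =>
    obtain ⟨p, rfl⟩ : ∃ p, m = p + 1 := ⟨m - 1, by omega⟩
    rw [S2_succ, ih _ (by omega), ih _ (by omega)]; simp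

lemma S2_one_one : S2 1 1 = 1 := by simp [S2]

lemma hasDeriv_u (t : ℝ) : HasDerivAt (fun t => Real.exp t / (Real.exp t + 1))
    (Real.exp t / (Real.exp t + 1) - (Real.exp t / (Real.exp t + 1))^2) t := by
  have h0 : Real.exp t + 1 ≠ 0 := by positivity
  have := (Real.hasDerivAt_exp t).div ((Real.hasDerivAt_exp t).add_const 1) h0
  refine this.congr_deriv ?_
  field_simp

lemma iter_f (j : ℕ) : iteratedDeriv j (fun t : ℝ => 2 * (Real.exp t / (Real.exp t + 1))) =
    fun t => ∑ l ∈ range (j+1), 2 * ((-1:ℝ)^l * (Nat.factorial l : ℝ)) * S2 (j+1) (l+1) *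
      (Real.exp t / (Real.exp t + 1))^(l+1) := by
  induction j with
  | zero => ext t; simp [S2_one_one]
  | succ j ih =>
    rw [iteratedDeriv_succ, ih]
    ext t
    have hd := HasDerivAt.fun_sum (u := range (j+1)) (fun l _ => ((hasDeriv_u t).pow (l+1)).const_mul
      (2 * ((-1:ℝ)^l * (Nat.factorial l : ℝ)) * S2 (j+1) (l+1)))
    refine hd.deriv.trans ?_
    generalize Real.exp t / (Real.exp t + 1) = u
    have hs : ∀ l : ℕ, 2 * ((-1:ℝ)^l * (Nat.factorial l : ℝ)) * S2 (j+1+1) (l+1) * u^(l+1) =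
        2 * ((-1:ℝ)^l * (Nat.factorial l : ℝ)) * ((l+1) * S2 (j+1) (l+1)) * u^(l+1) +
        2 * ((-1:ℝ)^l * (Nat.factorial l : ℝ)) * S2 (j+1) l * u^(l+1) := by
      intro l; rw [S2_succ]; ring
    simp only [hs]
    rw [Finset.sum_add_distrib]
    rw [Finset.sum_range_succ _ (j+1), Finset.sum_range_succ' _ (j+1), S2_zero_right, S2_vanish j (j+1+1) (by omega)]
    simp only [mul_zero, zero_mul, add_zero, Finset.sum_add_distrib.symm]
    apply Finset.sum_congr rfl
    intro l _
    simp only [Nat.factorial_succ, Nat.add_sub_cancel]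
    push_cast
    ring

theorem stmt_14 (n : ℕ) (hn : 1 ≤ n) :
    2 ^ (2 * n) *
        iteratedDeriv (2 * n) (fun t : ℝ => 2 * Real.exp (t / 2) / (Real.exp t + 1)) 0 =
      4 ^ n *
        ∑ k ∈ Finset.range (2 * n + 1),
          (∑ ℓ ∈ Finset.Icc 1 (2 * n - k + 1),
            ((-1 : ℝ) ^ (ℓ - 1) * (Nat.factorial (ℓ - 1) : ℝ) / 2 ^ (ℓ - 1)) *
              S2 (2 * n - k + 1) ℓ) *
            ((-1 : ℝ) ^ k / 2 ^ k) * (Nat.choose (2 * n) k : ℝ) := by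
  have hfun : (fun t : ℝ => 2 * Real.exp (t / 2) / (Real.exp t + 1)) =
      fun t => Real.exp ((-1/2) * t) * (2 * (Real.exp t / (Real.exp t + 1))) := by
    ext t
    have : Real.exp (t/2) = Real.exp ((-1/2) * t) * Real.exp t := by
      rw [← Real.exp_add]; congr 1; ring
    rw [this]; ring
  have hc : ContDiff ℝ (2 * n : ℕ) (fun t : ℝ => 2 * (Real.exp t / (Real.exp t + 1))) := by
    refine contDiff_const.mul (Real.contDiff_exp.div (Real.contDiff_exp.add contDiff_const) ?_)
    intro t; positivity
  have hc2 : ContDiff ℝ (2 * n : ℕ) (fun t : ℝ => Real.exp ((-1/2) * t)) := by fun_prop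
  rw [hfun, iteratedDeriv_fun_mul hc2.contDiffAt hc.contDiffAt, pow_mul]
  norm_num only
  congr 1
  apply Finset.sum_congr rfl
  intro k _
  rw [iter_f]
  have h1 : ∑ ℓ ∈ Finset.Icc 1 (2 * n - k + 1),
            ((-1 : ℝ) ^ (ℓ - 1) * (Nat.factorial (ℓ - 1) : ℝ) / 2 ^ (ℓ - 1)) *
              S2 (2 * n - k + 1) ℓ = ∑ l ∈ range (2 * n - k + 1), 2 * ((-1:ℝ)^l * (Nat.factorial l : ℝ)) * S2 (2 * n - k + 1) (l+1) *
      (Real.exp 0 / (Real.exp 0 + 1))^(l+1) := by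
    rw [Icc_sum]
    apply Finset.sum_congr rfl
    intro l _
    rw [Real.exp_zero, Nat.add_sub_cancel, div_pow, one_pow]
    norm_num [pow_succ]
    field_simp
  rw [h1, iteratedDeriv_exp_const_mul]
  simp only [mul_zero, Real.exp_zero, mul_one]
  rw [show (-(1/2) : ℝ) = (-1)/2 by norm_num, div_pow]
  ring
end

section
/- Let x be a real number, α a nonzero real number, λ > 0, and n ≥ 0 an integer. Then the two-parameter Euler polynomial E_n(x; α, λ) satisfies E_n(x; α, λ) = 2 Σ_{k=0}^{n} (−α)^{n−k} C(n, k) [ Σ_{m=1}^{n−k+1} (−1)^{m−1} (m−1)! S(n−k+1, m) (1/(λ+1))^m ] x^k. Equivalently, the n-th derivative at z = 0 of z ↦ 2 e^{x z}/(λ e^{α z} + 1) equals the right-hand side. -/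
open Real Finset

lemma S2_rec (k m : ℕ) : S2 (k+1) (m+1) = (m+1) * S2 k (m+1) + S2 k m := by
  unfold S2
  have key : ∑ ℓ ∈ Finset.Icc 1 (m+1), (-1 : ℝ) ^ (m+1 - ℓ) * (Nat.choose (m+1) ℓ : ℝ) * (ℓ : ℝ) ^ (k+1)
      = (m+1) * ∑ ℓ ∈ Finset.Icc 1 (m+1), (-1 : ℝ) ^ (m+1 - ℓ) * (Nat.choose (m+1) ℓ : ℝ) * (ℓ : ℝ) ^ k
        + (m+1) * ∑ ℓ ∈ Finset.Icc 1 m, (-1 : ℝ) ^ (m - ℓ) * (Nat.choose m ℓ : ℝ) * (ℓ : ℝ) ^ k := by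
    rw [Finset.sum_Icc_succ_top (by omega), Finset.sum_Icc_succ_top (by omega), mul_add,
      Finset.mul_sum, Finset.mul_sum, add_right_comm, ← Finset.sum_add_distrib]
    congr 1
    · refine Finset.sum_congr rfl fun ℓ hℓ => ?_
      have h2 : ℓ ≤ m := (Finset.mem_Icc.1 hℓ).2
      have h3 := Nat.choose_mul_succ_eq m ℓ
      have h4 : (Nat.choose m ℓ : ℝ) * (m+1) = Nat.choose (m+1) ℓ * (m + 1 - ℓ) := by
        have := congrArg (Nat.cast : ℕ → ℝ) h3
        rw [Nat.cast_mul, Nat.cast_mul, Nat.cast_sub (by omega)] at this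
        push_cast at this
        exact this
      rw [show m + 1 - ℓ = (m - ℓ) + 1 by omega, pow_succ, pow_succ]
      linear_combination (-(-1 : ℝ)^(m-ℓ) * (ℓ:ℝ)^k) * h4
    · push_cast
      ring
  rw [key, Nat.factorial_succ]
  have : (Nat.factorial m : ℝ) ≠ 0 := by positivity
  push_cast
  field_simp

lemma S2_zero_left (m : ℕ) : S2 0 (m+1) = (-1)^m / (Nat.factorial (m+1) : ℝ) := by
  unfold S2
  have h := add_pow (1:ℝ) (-1) (m+1)
  rw [← Finset.sum_range_reflect] at h
  have h' : (0:ℝ) = ∑ ℓ ∈ Finset.range (m+1+1), (-1 : ℝ) ^ (m+1 - ℓ) * (Nat.choose (m+1) ℓ : ℝ) * (ℓ : ℝ) ^ 0 := by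
    have := add_pow (1:ℝ) (-1) (m+1)
    simpa using this
  rw [Finset.range_eq_Ico, Finset.sum_eq_sum_Ico_succ_bot (by omega)] at h'
  have e : Finset.Ico (0+1) (m+1+1) = Finset.Icc 1 (m+1) := by ext; simp
  rw [e] at h'
  have : ∑ ℓ ∈ Finset.Icc 1 (m+1), (-1 : ℝ) ^ (m+1 - ℓ) * (Nat.choose (m+1) ℓ : ℝ) * (ℓ : ℝ) ^ 0 = (-1)^m := by
    simp only [Nat.sub_zero, Nat.choose_zero_right, pow_succ] at h' ⊢
    simp at h' ⊢
    linarith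
  rw [this]; ring

lemma S2_top (j m : ℕ) (h : j + 1 < m) : S2 (j+1) m = 0 := by
  induction j generalizing m with
  | zero =>
    obtain ⟨p, rfl⟩ : ∃ p, m = p + 2 := ⟨m - 2, by omega⟩
    rw [S2_rec, S2_zero_left, S2_zero_left, Nat.factorial_succ (p+1)]
    have : (Nat.factorial (p+1) : ℝ) ≠ 0 := by positivity
    push_cast
    have : (p:ℝ) + 1 + 1 ≠ 0 := by positivity
    field_simp
    ring
  | succ j ih =>
    obtain ⟨p, rfl⟩ : ∃ p, m = p + 1 := ⟨m - 1, by omega⟩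
    rw [S2_rec, ih _ (by omega), ih _ (by omega)]
    simp

lemma iter_u (a l : ℝ) (hl : 0 < l) (j : ℕ) :
    iteratedDeriv j (fun z : ℝ => 1 / (l * Real.exp (a * z) + 1)) = fun z =>
      (-a)^j * ∑ m ∈ Finset.range (j+1), (-1 : ℝ) ^ m * (Nat.factorial m : ℝ) * S2 (j+1) (m+1) *
              (1 / (l * Real.exp (a * z) + 1)) ^ (m+1) := by
  induction j with
  | zero => simp [S2_one_one]
  | succ j ih =>
    rw [iteratedDeriv_succ, ih]
    funext z
    have hpos : l * Real.exp (a * z) + 1 ≠ 0 := by positivity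
    have hu : HasDerivAt (fun z : ℝ => 1 / (l * Real.exp (a * z) + 1))
        (-a * (1 / (l * Real.exp (a * z) + 1) - (1 / (l * Real.exp (a * z) + 1))^2)) z := by
      have h1 : HasDerivAt (fun z : ℝ => l * Real.exp (a * z) + 1) (l * (Real.exp (a*z) * a)) z := by
        have := ((((hasDerivAt_id z).const_mul a).exp).const_mul l).add_const 1
        simpa using this
      have h2 := (hasDerivAt_const z (1:ℝ)).fun_div h1 hpos
      refine h2.congr_deriv ?_
      field_simp
      ring
    have hs := (HasDerivAt.fun_sum (u := Finset.range (j+1)) (fun m _ =>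
      (hu.fun_pow (m+1)).const_mul ((-1 : ℝ) ^ m * (Nat.factorial m : ℝ) * S2 (j+1) (m+1)))).const_mul ((-a)^j)
    rw [hs.deriv]
    generalize 1 / (l * Real.exp (a * z) + 1) = u
    have e1 : ∀ m : ℕ, (-1 : ℝ) ^ m * (Nat.factorial m : ℝ) * S2 (j+1+1) (m+1) * u ^ (m+1)
       = (-1 : ℝ) ^ m * (Nat.factorial m : ℝ) * (m+1) * S2 (j+1) (m+1) * u ^ (m+1)
        + (-1 : ℝ) ^ m * (Nat.factorial m : ℝ) * S2 (j+1) m * u ^ (m+1) := by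
      intro m; rw [S2_rec]; ring
    simp only [e1]
    rw [Finset.sum_add_distrib, Finset.sum_range_succ _ (j+1), S2_top j (j+1+1) (by omega),
      Finset.sum_range_succ' _ (j+1), S2_zero_right, mul_zero, zero_mul, add_zero, mul_zero,
      zero_mul, add_zero,
      ← Finset.sum_add_distrib, Finset.mul_sum, Finset.mul_sum]
    refine Finset.sum_congr rfl fun m _ => ?_
    rw [Nat.factorial_succ]
    push_cast
    ring

theorem stmt_16 (x a l : ℝ) (ha : a ≠ 0) (hl : 0 < l) (n : ℕ) :
    iteratedDeriv n (fun z : ℝ => 2 * Real.exp (x * z) / (l * Real.exp (a * z) + 1)) 0 =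
      2 * ∑ k ∈ Finset.range (n + 1),
        (-a) ^ (n - k) * (Nat.choose n k : ℝ) *
          (∑ m ∈ Finset.Icc 1 (n - k + 1),
            (-1 : ℝ) ^ (m - 1) * (Nat.factorial (m - 1) : ℝ) * S2 (n - k + 1) m *
              (1 / (l + 1)) ^ m) *
          x ^ k := by
  have e : (fun z : ℝ => 2 * Real.exp (x * z) / (l * Real.exp (a * z) + 1)) =
      fun z => 2 * (Real.exp (x * z) * (1 / (l * Real.exp (a * z) + 1))) := by
    funext z; ring
  have c1 : ContDiff ℝ n (fun z : ℝ => Real.exp (x * z)) := by fun_prop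
  have c2 : ContDiff ℝ n (fun z : ℝ => 1 / (l * Real.exp (a * z) + 1)) := by
    refine ContDiff.div (by fun_prop) (by fun_prop) fun z => ?_
    positivity
  rw [e, iteratedDeriv_const_mul_field, iteratedDeriv_fun_mul c1.contDiffAt c2.contDiffAt]
  congr 1
  refine Finset.sum_congr rfl fun k _ => ?_
  have hI : Finset.Icc 1 (n-k+1) = Finset.Ico 1 (n-k+1+1) := by ext; simp
  rw [iter_u a l hl, iteratedDeriv_exp_const_mul, hI, Finset.sum_Ico_eq_sum_range]
  simp only [mul_zero, Real.exp_zero, mul_one, Nat.add_sub_cancel, Nat.add_sub_cancel_left, add_comm 1]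
  ring
end
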